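/- arXiv:0711.1993 — 5 statements merged into one kernel-verified Lean document; each statement's English description precedes it below -/
import Mathlib

section
/- Let N = {1, …, n} and let v be a capacity on (N, 2^N). Then Marichal's entropy H_M(v) := Σ_{i=1}^n Σ_{A ⊆ N\{i}} γ^n_{|A|} h[v(A ∪ {i}) − v(A)], where γ^n_k = (n−k−1)! k! / n!, equals the average of the Shannon entropies of the increment distributions over all maximal chains: H_M(v) = (1/n!) Σ_{C ∈ 𝒞(2^N)} H_S(p^{v,C}). -/
open Finset

variable {α : Type*} [DecidableEq α] [Fintype α]

/-- `c = (c 0, …, c m)` is a maximal chain of the set system `S`: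
`∅ = c 0 ⊊ c 1 ⊊ ⋯ ⊊ c m = N`, each `c i ∈ S`, and no element of `S` lies strictly
between consecutive elements. Its length is `m`. -/
def IsMaxChainOf (S : Finset (Finset α)) (m : ℕ) (c : Fin (m + 1) → Finset α) : Prop :=
  c 0 = ∅ ∧ c (Fin.last m) = Finset.univ ∧ (∀ i, c i ∈ S) ∧
    (∀ i : Fin m, c i.castSucc ⊂ c i.succ) ∧
    (∀ i : Fin m, ∀ x ∈ S, ¬(c i.castSucc ⊂ x ∧ x ⊂ c i.succ))

/-- `(N, S)` is a regular set system: `∅, N ∈ S` and every maximal chain has length `|N|`. -/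
def IsRegularSetSystem (S : Finset (Finset α)) : Prop :=
  ∅ ∈ S ∧ Finset.univ ∈ S ∧
    ∀ (m : ℕ) (c : Fin (m + 1) → Finset α), IsMaxChainOf S m c → m = Fintype.card α

/-- A capacity on the set system `S`: a `[0,1]`-valued, monotone set function
with `v ∅ = 0` and `v N = 1`. -/
def IsCapacity (S : Finset (Finset α)) (v : Finset α → ℝ) : Prop :=
  v ∅ = 0 ∧ v Finset.univ = 1 ∧ (∀ A ∈ S, 0 ≤ v A ∧ v A ≤ 1) ∧
    ∀ A ∈ S, ∀ B ∈ S, A ⊆ B → v A ≤ v B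

/-- `h(x) = -x log₂ x` (with the convention `0 log 0 = 0`, satisfied by `Real.logb`). -/
noncomputable def hfun (x : ℝ) : ℝ := -(x * Real.logb 2 x)

/-- Shannon entropy of a probability distribution. -/
noncomputable def shannonEntropy {m : ℕ} (p : Fin m → ℝ) : ℝ := ∑ i, hfun (p i)

/-- The increment distribution `p^{v,C}` along a chain `c`. -/
def chainDist (v : Finset α → ℝ) {m : ℕ} (c : Fin (m + 1) → Finset α) : Fin m → ℝ :=
  fun i => v (c i.succ) - v (c i.castSucc)

/-- The maximal chains of `S` (of length `|N|`; in a regular set system these are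
all the maximal chains). -/
noncomputable def maxChains (S : Finset (Finset α)) :
    Finset (Fin (Fintype.card α + 1) → Finset α) :=
  @Finset.filter _ (fun c => IsMaxChainOf S (Fintype.card α) c) (Classical.decPred _)
    Finset.univ

/-- The entropy `H(v)` of a capacity `v` on a regular set system. -/
noncomputable def capEntropy (S : Finset (Finset α)) (v : Finset α → ℝ) : ℝ :=
  (1 / ((maxChains S).card : ℝ)) * ∑ c ∈ maxChains S, shannonEntropy (chainDist v c)

/-- The coefficient `γ^n_k = (n - k - 1)! k! / n!`. -/
noncomputable def gammaCoef (n k : ℕ) : ℝ :=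
  ((n - k - 1).factorial : ℝ) * (k.factorial : ℝ) / (n.factorial : ℝ)

/-- The chain of initial segments of a numbering. -/
def chainOf (f : Numbering α) (k : Fin (Fintype.card α + 1)) : Finset α :=
  {x | (f x).val < k.val}

/-- The set of elements strictly preceding `i` in a numbering. -/
def preSet (f : Numbering α) (i : α) : Finset α := {x | f x < f i}

lemma chainOf_castSucc (f : Numbering α) (k : Fin (Fintype.card α)) :
    chainOf f k.castSucc = preSet f (f.symm k) := by
  ext x; simp [chainOf, preSet]

lemma chainOf_succ (f : Numbering α) (k : Fin (Fintype.card α)) :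
    chainOf f k.succ = insert (f.symm k) (chainOf f k.castSucc) := by
  ext x
  simp only [chainOf, Finset.mem_filter, Finset.mem_univ, true_and, Fin.val_succ,
    Fin.val_castSucc, Finset.mem_insert, Equiv.eq_symm_apply, Fin.ext_iff]
  omega

lemma chainOf_mem (f : Numbering α) :
    chainOf f ∈ maxChains (Finset.univ : Finset (Finset α)) := by
  have hcov : ∀ i : Fin (Fintype.card α), chainOf f i.castSucc ⋖ chainOf f i.succ := by
    intro i
    rw [chainOf_succ]
    apply Finset.covBy_insert
    simp [chainOf]
  simp only [maxChains, Finset.mem_filter, Finset.mem_univ, true_and]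
  refine ⟨by simp [chainOf], by simp [chainOf], by simp, fun i => (hcov i).1, ?_⟩
  rintro i x - ⟨h1, h2⟩
  exact (hcov i).2 h1 h2

lemma chainOf_injective : Function.Injective (chainOf (α := α)) := by
  intro f g h
  have key : ∀ k : Fin (Fintype.card α), f.symm k = g.symm k := by
    intro k
    have h1 := chainOf_succ f k
    rw [h, chainOf_succ g k] at h1
    have h2 : g.symm k ∉ chainOf g k.castSucc := by simp [chainOf]
    have h3 : g.symm k ∈ insert (f.symm k) (chainOf g k.castSucc) := by
      rw [← h1]; simp
    rcases Finset.mem_insert.1 h3 with h4 | h4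
    · exact h4.symm
    · exact absurd h4 h2
  have : f.symm = g.symm := Equiv.ext key
  simpa using congrArg Equiv.symm this

lemma chainOf_surj (c : Fin (Fintype.card α + 1) → Finset α)
    (hc : c ∈ maxChains (Finset.univ : Finset (Finset α))) : ∃ f, chainOf f = c := by
  simp only [maxChains, Finset.mem_filter, Finset.mem_univ, true_and] at hc
  obtain ⟨h0, -, -, hs, hb⟩ := hc
  have hcov : ∀ i : Fin (Fintype.card α), c i.castSucc ⋖ c i.succ :=
    fun i => ⟨hs i, fun x h1 h2 => hb i x (Finset.mem_univ _) ⟨h1, h2⟩⟩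
  have hex : ∀ i : Fin (Fintype.card α), ∃ a, a ∉ c i.castSucc ∧ insert a (c i.castSucc) = c i.succ := by
    intro i
    obtain ⟨a, ha, h⟩ := Finset.covBy_iff_exists_insert.1 (hcov i)
    exact ⟨a, ha, h⟩
  choose a ha hins using hex
  have hmono : StrictMono c := Fin.strictMono_iff_lt_succ.2 hs
  have hne : ∀ i j, i < j → a i ≠ a j := by
    intro i j hij he
    have h1 : a i ∈ c i.succ := by rw [← hins]; simp
    have h2 : c i.succ ≤ c j.castSucc := hmono.monotone (by
      rw [Fin.le_def]; simpa using hij)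
    exact ha j (he ▸ h2 h1)
  have hinj : Function.Injective a := by
    intro i j h
    rcases lt_trichotomy i j with h1 | h1 | h1
    · exact absurd h (hne _ _ h1)
    · exact h1
    · exact absurd h.symm (hne _ _ h1)
  have hbij : Function.Bijective a :=
    (Fintype.bijective_iff_injective_and_card a).2 ⟨hinj, by simp⟩
  refine ⟨(Equiv.ofBijective a hbij).symm, ?_⟩
  funext k
  induction k using Fin.induction with
  | zero => rw [h0]; simp [chainOf]
  | succ i ih => rw [chainOf_succ, ih, ← hins]; simp

/-- Numberings in which the set of predecessors of `i` is `A`. -/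
def preCount (i : α) (A : Finset α) : Finset (Numbering α) := {f | preSet f i = A}

lemma mem_preCount (f : Numbering α) (i : α) (A : Finset α) :
    f ∈ preCount i A ↔ f ∈ Numbering.prefixed A ∧ (f i).val = A.card := by
  simp only [preCount, Finset.mem_filter, Finset.mem_univ, true_and, Numbering.mem_prefixed,
    Numbering.IsPrefix]
  constructor
  · rintro rfl
    have hcard : (preSet f i).card = (f i).val := by
      have : preSet f i = (Finset.Iio (f i)).map f.symm.toEmbedding := by
        ext x; simp [preSet, Finset.mem_map_equiv]
      rw [this]; simp
    refine ⟨fun x => ?_, hcard.symm⟩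
    rw [hcard]; simp [preSet]
  · rintro ⟨h, hi⟩
    ext x
    rw [h x, ← hi]; simp [preSet]

lemma card_preCount_le (i j : α) (A : Finset α) (hi : i ∉ A) (hj : j ∉ A) :
    (preCount i A).card ≤ (preCount j A).card := by
  apply Finset.card_le_card_of_injOn (fun f => (Equiv.swap i j).trans f)
  · intro f hf
    have hf := Finset.mem_coe.1 hf
    apply Finset.mem_coe.2
    rw [mem_preCount] at hf ⊢
    obtain ⟨h1, h2⟩ := hf
    rw [Numbering.mem_prefixed] at h1
    refine ⟨?_, by simpa using h2⟩
    rw [Numbering.mem_prefixed]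
    intro x
    rw [Equiv.trans_apply, ← h1]
    by_cases hxi : x = i
    · subst hxi; simp [hi, hj]
    by_cases hxj : x = j
    · subst hxj; simp [hi, hj]
    rw [Equiv.swap_apply_of_ne_of_ne hxi hxj]
  · intro f _ g _ h
    ext x
    have := congrArg (fun e : Numbering α => e (Equiv.swap i j x)) h
    simpa using congrArg Fin.val this

lemma card_preCount (i : α) (A : Finset α) (hi : i ∉ A) :
    (preCount i A).card = A.card.factorial * (Fintype.card α - A.card - 1).factorial := by
  have hlt : A.card < Fintype.card α := Finset.card_lt_univ_of_notMem hi
  have hU : Numbering.prefixed A = Aᶜ.biUnion (fun j => preCount j A) := by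
    ext f
    simp only [Finset.mem_biUnion, mem_preCount, Finset.mem_compl]
    constructor
    · intro h
      refine ⟨f.symm ⟨A.card, hlt⟩, ?_, h, by simp⟩
      rw [Numbering.mem_prefixed.1 h]; simp
    · rintro ⟨j, -, h, -⟩; exact h
  have hcard := congrArg Finset.card hU
  rw [Finset.card_biUnion, Numbering.card_prefixed,
    Finset.sum_congr rfl (fun j hj => le_antisymm
      (card_preCount_le j i A (Finset.mem_compl.1 hj) hi)
      (card_preCount_le i j A hi (Finset.mem_compl.1 hj))),
    Finset.sum_const, Finset.card_compl, smul_eq_mul] at hcard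
  · obtain ⟨m, hm⟩ : ∃ m, Fintype.card α - A.card = m + 1 :=
      ⟨Fintype.card α - A.card - 1, by omega⟩
    rw [hm, Nat.factorial_succ] at hcard
    rw [hm, Nat.add_sub_cancel]
    apply Nat.eq_of_mul_eq_mul_left (Nat.succ_pos m)
    rw [Nat.succ_eq_add_one, ← hcard]; ring
  · intro x _ y _ hxy
    change Disjoint (preCount x A) (preCount y A)
    rw [Finset.disjoint_left]
    intro f h1 h2
    rw [mem_preCount] at h1 h2
    exact hxy (f.injective (Fin.ext (h1.2.trans h2.2.symm)))

/-- Dukhovny: Marichal's entropy of a capacity on `2^N` is the average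
over all maximal chains of the Shannon entropies of the increment distributions. -/
theorem marichalEntropy_eq_average_over_maxChains (v : Finset α → ℝ)
    (hv : IsCapacity (Finset.univ : Finset (Finset α)) v) :
    ∑ i : α, ∑ A ∈ (Finset.univ.erase i).powerset,
        gammaCoef (Fintype.card α) A.card * hfun (v (insert i A) - v A)
      = (1 / ((Fintype.card α).factorial : ℝ)) *
          ∑ c ∈ maxChains (Finset.univ : Finset (Finset α)),
            shannonEntropy (chainDist v c) := by
  have hR : ∑ c ∈ maxChains (Finset.univ : Finset (Finset α)), shannonEntropy (chainDist v c)
      = ∑ f : Numbering α, shannonEntropy (chainDist v (chainOf f)) := by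
    symm
    apply Finset.sum_bij (fun f _ => chainOf f)
    · intro f _; exact chainOf_mem f
    · intro f _ g _ h; exact chainOf_injective h
    · intro c hc
      obtain ⟨f, hf⟩ := chainOf_surj c hc
      exact ⟨f, Finset.mem_univ _, hf⟩
    · intros; rfl
  have hE : ∀ f : Numbering α, shannonEntropy (chainDist v (chainOf f))
      = ∑ i : α, ∑ A ∈ (Finset.univ.erase i).powerset,
          if f ∈ preCount i A then hfun (v (insert i A) - v A) else 0 := by
    intro f
    unfold shannonEntropy chainDist
    rw [← Equiv.sum_comp f]
    refine Finset.sum_congr rfl fun i _ => ?_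
    rw [chainOf_succ, chainOf_castSucc, Equiv.symm_apply_apply]
    have hmem : preSet f i ∈ (Finset.univ.erase i).powerset := by
      rw [Finset.mem_powerset]
      intro x hx
      rw [Finset.mem_erase]
      refine ⟨?_, Finset.mem_univ _⟩
      rintro rfl
      simp [preSet] at hx
    simp only [preCount, Finset.mem_filter, Finset.mem_univ, true_and]
    rw [Finset.sum_ite_eq, if_pos hmem]
  rw [hR, Finset.sum_congr rfl (fun f _ => hE f), Finset.sum_comm, Finset.mul_sum]
  refine Finset.sum_congr rfl fun i _ => ?_
  rw [Finset.sum_comm, Finset.mul_sum]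
  refine Finset.sum_congr rfl fun A hA => ?_
  have hi : i ∉ A := fun h => by
    simpa using Finset.mem_powerset.1 hA h
  rw [← Finset.sum_filter, Finset.sum_const, Finset.filter_univ_mem, card_preCount i A hi,
    nsmul_eq_mul, gammaCoef]
  push_cast
  ring
end

section
/- Let (N, 𝔖) be a regular set system with |N| = n ≥ 1 and let v be a capacity on 𝔖. Then H(v) = 0 if and only if v is {0,1}-valued, i.e. v(A) ∈ {0, 1} for every A ∈ 𝔖. -/
open Finset

variable {α : Type*} [DecidableEq α] [Fintype α]

/-- A saturated chain of `S` from `X` to the full set, passing through `Z`. -/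
def ThruChain (S : Finset (Finset α)) (X Z : Finset α) : Prop :=
  ∃ (m : ℕ) (c : Fin (m + 1) → Finset α), c 0 = X ∧ c (Fin.last m) = Finset.univ ∧
    (∀ i, c i ∈ S) ∧ (∀ i : Fin m, c i.castSucc ⊂ c i.succ) ∧
    (∀ i : Fin m, ∀ x ∈ S, ¬(c i.castSucc ⊂ x ∧ x ⊂ c i.succ)) ∧ ∃ i, c i = Z

theorem ThruChain.prepend {S : Finset (Finset α)} {X Y Z : Finset α} (hX : X ∈ S)
    (hXY : X ⊂ Y) (hcov : ∀ x ∈ S, ¬(X ⊂ x ∧ x ⊂ Y)) (h : ThruChain S Y Z) :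
    ThruChain S X Z := by
  obtain ⟨m, c, h0, hl, hS, hlt, hc, j, hj⟩ := h
  refine ⟨m + 1, Fin.cons X c, rfl, ?_, ?_, ?_, ?_, j.succ, ?_⟩
  · rw [← Fin.succ_last, Fin.cons_succ]; exact hl
  · intro i
    refine Fin.cases ?_ (fun i => ?_) i
    · simpa using hX
    · simpa using hS i
  · intro i
    refine Fin.cases ?_ (fun i => ?_) i
    · simpa [h0] using hXY
    · rw [← Fin.succ_castSucc, Fin.cons_succ, Fin.cons_succ]; exact hlt i
  · intro i
    refine Fin.cases ?_ (fun i => ?_) i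
    · simpa [h0] using hcov
    · rw [← Fin.succ_castSucc, Fin.cons_succ, Fin.cons_succ]; exact hc i
  · simpa using hj

theorem ThruChain.extend {S : Finset (Finset α)} {Z : Finset α} (hZ : Z ∈ S)
    (hb : ThruChain S Z Z) : ∀ (k : ℕ) (X : Finset α), X ∈ S → X ⊆ Z →
      (Z \ X).card = k → ThruChain S X Z := by
  intro k
  induction k using Nat.strong_induction_on with
  | _ k ih =>
    intro X hX hXZ hk
    by_cases hEq : X = Z
    · subst hEq; exact hb
    · have hss : X ⊂ Z := lt_of_le_of_ne hXZ hEq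
      obtain ⟨Y, hY, hmin⟩ := Finset.exists_min_image
        (S.filter (fun x => X ⊂ x ∧ x ⊆ Z)) Finset.card
        ⟨Z, by simp [hZ, hss]⟩
      simp only [Finset.mem_filter] at hY hmin
      obtain ⟨hYS, hXY, hYZ⟩ := hY
      refine ThruChain.prepend hX hXY ?_ (ih _ ?_ Y hYS hYZ rfl)
      · rintro x hx ⟨h1, h2⟩
        have := hmin x ⟨hx, h1, h2.subset.trans hYZ⟩
        have := Finset.card_lt_card h2
        omega
      · have h1 := Finset.card_lt_card hXY
        have h2 := Finset.card_le_card hYZ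
        rw [← hk, Finset.card_sdiff_of_subset hYZ, Finset.card_sdiff_of_subset hXZ]
        omega

theorem exists_maxChain_through {S : Finset (Finset α)} (hS : IsRegularSetSystem S)
    {A : Finset α} (hA : A ∈ S) : ∃ c ∈ maxChains S, ∃ i, c i = A := by
  obtain ⟨he, hu, hreg⟩ := hS
  have h1 : ThruChain S Finset.univ Finset.univ :=
    ⟨0, fun _ => Finset.univ, rfl, rfl, fun _ => hu, fun i => i.elim0, fun i => i.elim0,
      0, rfl⟩
  have h2 : ThruChain S A Finset.univ :=
    ThruChain.extend hu h1 _ A hA (Finset.subset_univ _) rfl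
  have h3 : ThruChain S A A := by
    obtain ⟨m, c, h0, hl, hS, hlt, hc, j, hj⟩ := h2
    exact ⟨m, c, h0, hl, hS, hlt, hc, 0, h0⟩
  obtain ⟨m, c, h0, hl, hS, hlt, hc, j, hj⟩ :=
    ThruChain.extend hA h3 _ ∅ he (Finset.empty_subset _) rfl
  have hm : IsMaxChainOf S m c := ⟨h0, hl, hS, hlt, hc⟩
  have := hreg m c hm
  subst this
  exact ⟨c, by simp [maxChains, hm], j, hj⟩

theorem hfun_nonneg {x : ℝ} (h0 : 0 ≤ x) (h1 : x ≤ 1) : 0 ≤ hfun x := by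
  have := Real.logb_nonpos (b := 2) (by norm_num) h0 h1
  unfold hfun
  nlinarith

theorem hfun_eq_zero {x : ℝ} (h0 : 0 ≤ x) : hfun x = 0 ↔ x = 0 ∨ x = 1 := by
  unfold hfun
  constructor
  · intro h
    rcases mul_eq_zero.mp (neg_eq_zero.mp h) with h | h
    · exact Or.inl h
    · rw [Real.logb_eq_zero] at h
      rcases h with h | h | h | h | h | h
      any_goals norm_num at h
      · exact Or.inl h
      · exact Or.inr h
      · linarith
  · rintro (h | h) <;> simp [h]

/-- the entropy of a capacity on a regular set system vanishes iff
the capacity is `{0,1}`-valued. -/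
theorem capEntropy_eq_zero_iff (S : Finset (Finset α)) (hS : IsRegularSetSystem S)
    (hn : 1 ≤ Fintype.card α) (v : Finset α → ℝ) (hv : IsCapacity S v) :
    capEntropy S v = 0 ↔ ∀ A ∈ S, v A = 0 ∨ v A = 1 := by
  obtain ⟨v0, v1, vb, vm⟩ := id hv
  have hinc : ∀ c ∈ maxChains S, ∀ i, 0 ≤ chainDist v c i ∧ chainDist v c i ≤ 1 := by
    intro c hc i
    simp only [maxChains, Finset.mem_filter, Finset.mem_univ, true_and] at hc
    obtain ⟨-, -, hcS, hlt, -⟩ := hc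
    have h1 := vm _ (hcS i.castSucc) _ (hcS i.succ) (hlt i).subset
    have h2 := vb _ (hcS i.castSucc)
    have h3 := vb _ (hcS i.succ)
    unfold chainDist
    constructor <;> linarith
  have hnn : ∀ c ∈ maxChains S, 0 ≤ shannonEntropy (chainDist v c) := fun c hc =>
    Finset.sum_nonneg fun i _ => hfun_nonneg (hinc c hc i).1 (hinc c hc i).2
  constructor
  · intro h A hA
    obtain ⟨c, hc, j, rfl⟩ := exists_maxChain_through hS hA
    have hcard : ((maxChains S).card : ℝ) ≠ 0 := by
      exact_mod_cast Finset.card_ne_zero_of_mem hc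
    have hsum : ∑ c ∈ maxChains S, shannonEntropy (chainDist v c) = 0 :=
      (mul_eq_zero.mp h).resolve_left (one_div_ne_zero hcard)
    have hz := (Finset.sum_eq_zero_iff_of_nonneg hnn).mp hsum c hc
    have hz' : ∀ i, chainDist v c i = 0 ∨ chainDist v c i = 1 := fun i =>
      (hfun_eq_zero (hinc c hc i).1).mp
        ((Finset.sum_eq_zero_iff_of_nonneg
          (fun i _ => hfun_nonneg (hinc c hc i).1 (hinc c hc i).2)).mp hz i (Finset.mem_univ i))
    simp only [maxChains, Finset.mem_filter, Finset.mem_univ, true_and] at hc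
    obtain ⟨hc0, -, hcS, hlt, -⟩ := hc
    clear hA
    induction j using Fin.induction with
    | zero => left; rw [hc0, v0]
    | succ i ih =>
      have h3 := vb _ (hcS i.succ)
      have h4 := hz' i
      unfold chainDist at h4
      rcases ih with h | h <;> rcases h4 with h4 | h4
      · left; linarith
      · right; linarith
      · right; linarith
      · linarith
  · intro h
    unfold capEntropy
    rw [Finset.sum_eq_zero, mul_zero]
    intro c hc
    refine Finset.sum_eq_zero fun i _ => ?_
    obtain ⟨hi0, hi1⟩ := hinc c hc i
    rw [hfun_eq_zero hi0]
    simp only [maxChains, Finset.mem_filter, Finset.mem_univ, true_and] at hc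
    obtain ⟨-, -, hcS, -, -⟩ := hc
    unfold chainDist at *
    rcases h _ (hcS i.castSucc) with h1 | h1 <;> rcases h _ (hcS i.succ) with h2 | h2
    · left; linarith
    · right; linarith
    · exfalso; linarith
    · left; linarith
end

section
/- Let (N, 𝔖) be a regular set system with |N| = n ≥ 1 and let v be a capacity on 𝔖. Then H(v) = log n if and only if v is the additive uniform capacity v*, i.e. v(A) = |A|/n for every A ∈ 𝔖. -/
open Finset

variable {α : Type*} [DecidableEq α] [Fintype α]

theorem aux_gap {n : ℝ} (hn : 0 < n) {p : ℝ} (hp : 0 ≤ p) :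
    0 ≤ p * Real.log n + (1 / n - p) + p * Real.log p ∧
      (p * Real.log n + (1 / n - p) + p * Real.log p = 0 → p = 1 / n) := by
  rcases hp.eq_or_lt with rfl | hp
  · have : 0 < 1 / n := by positivity
    constructor
    · simpa using this.le
    · intro h
      simp at h
      exact absurd h hn.ne'
  · have hnp : 0 < n * p := by positivity
    have hx : 0 < 1 / (n * p) := by positivity
    have hlog : Real.log (1 / (n * p)) = - (Real.log n + Real.log p) := by
      rw [one_div, Real.log_inv, Real.log_mul hn.ne' hp.ne']
    have key : p * Real.log n + (1 / n - p) + p * Real.log p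
        = p * ((1 / (n * p) - 1) - Real.log (1 / (n * p))) := by
      rw [hlog]; field_simp; ring
    rw [key]
    constructor
    · have := Real.log_le_sub_one_of_pos hx
      exact mul_nonneg hp.le (by linarith)
    · intro h
      by_contra hne
      have h1 : 1 / (n * p) ≠ 1 := by
        intro h1
        apply hne
        field_simp at h1 ⊢
        linarith
      have := Real.log_lt_sub_one_of_pos hx h1
      have : 0 < p * ((1 / (n * p) - 1) - Real.log (1 / (n * p))) :=
        mul_pos hp (by linarith)
      linarith

theorem aux_entropy {m : ℕ} (hm : 1 ≤ m) (p : Fin m → ℝ) (hp : ∀ i, 0 ≤ p i)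
    (hs : ∑ i, p i = 1) :
    shannonEntropy p ≤ Real.logb 2 m ∧
      (shannonEntropy p = Real.logb 2 m ↔ ∀ i, p i = 1 / (m : ℝ)) := by
  have hm0 : (0 : ℝ) < m := by exact_mod_cast hm
  have hl2 : 0 < Real.log 2 := Real.log_pos (by norm_num)
  have key : ∑ i, (p i * Real.log m + (1 / (m : ℝ) - p i) + p i * Real.log (p i))
      = Real.log 2 * (Real.logb 2 m - shannonEntropy p) := by
    simp only [Finset.sum_add_distrib, Finset.sum_sub_distrib, ← Finset.sum_mul, hs]
    simp only [shannonEntropy, hfun, Finset.sum_neg_distrib, Real.logb, mul_sub, mul_neg,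
      Finset.mul_sum]
    have e1 : Real.log 2 * (Real.log m / Real.log 2) = Real.log m := by field_simp
    have e2 : ∀ i, Real.log 2 * (p i * (Real.log (p i) / Real.log 2)) = p i * Real.log (p i) := by
      intro i; field_simp
    simp only [e1, e2]
    simp
    field_simp
    ring
  have hnn : 0 ≤ ∑ i, (p i * Real.log m + (1 / (m : ℝ) - p i) + p i * Real.log (p i)) :=
    Finset.sum_nonneg fun i _ => (aux_gap hm0 (hp i)).1
  refine ⟨?_, ?_, ?_⟩
  · rw [key] at hnn
    have := nonneg_of_mul_nonneg_right hnn hl2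
    linarith
  · intro h
    rw [h, sub_self, mul_zero,
      Finset.sum_eq_zero_iff_of_nonneg fun i _ => (aux_gap hm0 (hp i)).1] at key
    exact fun i => (aux_gap hm0 (hp i)).2 (key i (Finset.mem_univ i))
  · intro h
    simp only [shannonEntropy, hfun, h, one_div, Real.logb_inv]
    simp
    field_simp

/-- Chain-like sequences ending at the full set. -/
def UpChain (S : Finset (Finset α)) (m : ℕ) (c : Fin (m + 1) → Finset α) : Prop :=
  c (Fin.last m) = Finset.univ ∧ (∀ i, c i ∈ S) ∧
    (∀ i : Fin m, c i.castSucc ⊂ c i.succ) ∧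
    (∀ i : Fin m, ∀ x ∈ S, ¬(c i.castSucc ⊂ x ∧ x ⊂ c i.succ))

theorem aux_extend (S : Finset (Finset α)) (X Y : Finset α) (hXS : X ∈ S)
    (hX : ∃ (m : ℕ) (c : Fin (m + 1) → Finset α), UpChain S m c ∧ c 0 = X ∧ ∃ i, c i = Y) :
    ∀ (k : ℕ) (A : Finset α), A ∈ S → A ⊆ X → X.card - A.card ≤ k →
      ∃ (m : ℕ) (c : Fin (m + 1) → Finset α), UpChain S m c ∧ c 0 = A ∧ ∃ i, c i = Y := by
  intro k
  induction k with
  | zero =>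
    intro A hA hAX hk
    have : A = X := Finset.eq_of_subset_of_card_le hAX (by omega)
    subst this; exact hX
  | succ k ih =>
    intro A hA hAX hk
    by_cases hAe : A = X
    · subst hAe; exact hX
    have hss : A ⊂ X := hAX.ssubset_of_ne hAe
    obtain ⟨B, hB, hmin⟩ := Finset.exists_min_image
      (S.filter fun y => A ⊂ y ∧ y ⊆ X) Finset.card
      ⟨X, by simp [hXS, hss]⟩
    simp only [Finset.mem_filter] at hB hmin
    obtain ⟨hBS, hAB, hBX⟩ := hB
    have hc1 := Finset.card_lt_card hAB
    have hc2 := Finset.card_le_card hBX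
    obtain ⟨m, c, ⟨h1, h2, h3, h4⟩, h0, i, hi⟩ := ih B hBS hBX (by omega)
    refine ⟨m + 1, Fin.cons A c, ⟨?_, ?_, ?_, ?_⟩, by simp, i.succ, by simpa using hi⟩
    · rw [← Fin.succ_last, Fin.cons_succ]; exact h1
    · intro j
      refine Fin.cases ?_ (fun j => ?_) j
      · simpa using hA
      · simpa using h2 j
    · intro j
      refine Fin.cases ?_ (fun j => ?_) j
      · simpa [h0] using hAB
      · rw [← Fin.succ_castSucc, Fin.cons_succ, Fin.cons_succ]; exact h3 j
    · intro j x hx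
      refine Fin.cases ?_ (fun j => ?_) j
      · rw [Fin.castSucc_zero, Fin.cons_zero, Fin.cons_succ, h0]
        rintro ⟨ha, hb⟩
        have := hmin x ⟨hx, ha, hb.subset.trans hBX⟩
        have := Finset.card_lt_card hb
        omega
      · rw [← Fin.succ_castSucc, Fin.cons_succ, Fin.cons_succ]; exact h4 j x hx

theorem aux_exists (S : Finset (Finset α)) (hS : IsRegularSetSystem S) (A : Finset α)
    (hA : A ∈ S) : ∃ c ∈ maxChains S, ∃ i, c i = A := by
  obtain ⟨he, hu, hr⟩ := hS
  obtain ⟨m, c, hc, h0, -⟩ := aux_extend S Finset.univ Finset.univ hu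
    ⟨0, fun _ => Finset.univ, ⟨rfl, fun _ => hu, fun i => i.elim0, fun i => i.elim0⟩, rfl, 0, rfl⟩
    _ A hA (Finset.subset_univ _) le_rfl
  obtain ⟨m, c, ⟨h1, h2, h3, h4⟩, h0, hi⟩ := aux_extend S A A hA ⟨m, c, hc, h0, 0, h0⟩
    _ ∅ he (Finset.empty_subset _) le_rfl
  have hm : IsMaxChainOf S m c := ⟨h0, h1, h2, h3, h4⟩
  have := hr m c hm
  subst this
  exact ⟨c, by simpa [maxChains] using hm, hi⟩

theorem aux_card (S : Finset (Finset α)) (c : Fin (Fintype.card α + 1) → Finset α)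
    (hc : IsMaxChainOf S (Fintype.card α) c) (i : Fin (Fintype.card α + 1)) :
    (c i).card = i := by
  obtain ⟨h0, h1, -, h3, -⟩ := hc
  apply le_antisymm
  · induction i using Fin.reverseInduction with
    | last => rw [h1]; simp
    | cast i ih =>
      have := Finset.card_lt_card (h3 i)
      simp at ih ⊢
      omega
  · induction i using Fin.induction with
    | zero => simp
    | succ i ih =>
      have := Finset.card_lt_card (h3 i)
      simp at ih ⊢
      omega

theorem aux_sum {m : ℕ} (f : Fin (m + 1) → ℝ) :
    ∑ i : Fin m, (f i.succ - f i.castSucc) = f (Fin.last m) - f 0 := by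
  rw [Finset.sum_sub_distrib]
  have h1 := Fin.sum_univ_succ f
  have h2 := Fin.sum_univ_castSucc f
  linarith

/-- the entropy of a capacity on a regular set system attains its
maximum `log₂ n` iff the capacity is the additive uniform capacity `v*(A) = |A| / n`. -/
theorem capEntropy_eq_log_iff (S : Finset (Finset α)) (hS : IsRegularSetSystem S)
    (hn : 1 ≤ Fintype.card α) (v : Finset α → ℝ) (hv : IsCapacity S v) :
    capEntropy S v = Real.logb 2 (Fintype.card α) ↔
      ∀ A ∈ S, v A = (A.card : ℝ) / (Fintype.card α : ℝ) := by
  have hmem : ∀ c ∈ maxChains S, IsMaxChainOf S (Fintype.card α) c := by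
    intro c hc
    simpa [maxChains] using hc
  have hent : ∀ c ∈ maxChains S, _ := fun c hc =>
    aux_entropy hn (chainDist v c)
      (fun i => sub_nonneg.2 (hv.2.2.2 _ ((hmem c hc).2.2.1 _) _ ((hmem c hc).2.2.1 _)
        ((hmem c hc).2.2.2.1 i).subset))
      (by
        have := aux_sum (fun i => v (c i))
        simp only [(hmem c hc).1, (hmem c hc).2.1, hv.1, hv.2.1] at this
        simpa [chainDist] using this)
  have hpos : (0 : ℝ) < (maxChains S).card := by
    obtain ⟨c, hc, -⟩ := aux_exists S hS ∅ hS.1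
    exact_mod_cast Finset.card_pos.2 ⟨c, hc⟩
  have h1 : capEntropy S v = Real.logb 2 (Fintype.card α) ↔
      ∀ c ∈ maxChains S, shannonEntropy (chainDist v c) = Real.logb 2 (Fintype.card α) := by
    rw [← Finset.sum_eq_sum_iff_of_le (fun c hc => (hent c hc).1), capEntropy, Finset.sum_const,
      nsmul_eq_mul, one_div, inv_mul_eq_iff_eq_mul₀ hpos.ne']
  rw [h1]
  constructor
  · intro h A hA
    obtain ⟨c, hc, i, rfl⟩ := aux_exists S hS A hA
    have hp := (hent c hc).2.1 (h c hc)
    rw [aux_card S c (hmem c hc)]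
    clear hA
    induction i using Fin.induction with
    | zero => simp [(hmem c hc).1, hv.1]
    | succ i ih =>
      have := hp i
      simp only [chainDist] at this
      simp only [Fin.val_castSucc] at ih
      rw [Fin.val_succ, Nat.cast_add, add_div, ← ih, Nat.cast_one]
      linarith
  · intro h c hc
    refine (hent c hc).2.2 fun i => ?_
    have hm := hmem c hc
    rw [chainDist, h _ (hm.2.2.1 _), h _ (hm.2.2.1 _), aux_card S c hm, aux_card S c hm,
      Fin.val_succ, Fin.val_castSucc]
    push_cast
    ring
end

section
/- Let (N, 𝔖) be a regular set system with |N| = n ≥ 1, let v be a capacity on 𝔖 with v ≢ v*, and for 0 < λ < 1 define the capacity v_λ := (1 − λ)v + λv*. Then λ ↦ H(v_λ) is strictly increasing on (0, 1). -/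
open Finset

variable {α : Type*} [DecidableEq α] [Fintype α]

lemma negMulLog_le_tangent {n : ℕ} (hn : 1 ≤ n) {x : ℝ} (hx : 0 ≤ x) :
    Real.negMulLog x ≤ 1 / (n : ℝ) - x + x * Real.log n := by
  have hn0 : (0 : ℝ) < n := by exact_mod_cast hn
  have h := Real.negMulLog_le_one_sub_self (x := (n : ℝ) * x) (by positivity)
  rw [Real.negMulLog_mul] at h
  have h2 : Real.negMulLog (n : ℝ) = -(n * Real.log n) := by simp [Real.negMulLog]
  rw [h2] at h
  have h3 : (n : ℝ) * Real.negMulLog x ≤ n * (1 / (n : ℝ) - x + x * Real.log n) := by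
    have : (n : ℝ) * (1 / (n : ℝ) - x + x * Real.log n)
        = 1 - n * x + x * (n * Real.log n) := by field_simp
    rw [this]; linarith
  exact le_of_mul_le_mul_left h3 hn0

lemma sum_negMulLog_le {n : ℕ} (hn : 1 ≤ n) (q : Fin n → ℝ) (hq : ∀ i, 0 ≤ q i)
    (hs : ∑ i, q i = 1) : ∑ i, Real.negMulLog (q i) ≤ Real.log n := by
  have hn0 : (n : ℝ) ≠ 0 := by positivity
  calc ∑ i, Real.negMulLog (q i)
      ≤ ∑ i, (1 / (n : ℝ) - q i + q i * Real.log n) :=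
        Finset.sum_le_sum fun i _ => negMulLog_le_tangent hn (hq i)
    _ = Real.log n := by
        rw [Finset.sum_add_distrib, Finset.sum_sub_distrib, ← Finset.sum_mul, hs]
        simp [hn0]

lemma negMulLog_inv_nat {n : ℕ} (hn : 1 ≤ n) :
    (n : ℝ) * Real.negMulLog (1 / (n : ℝ)) = Real.log n := by
  have hn0 : (n : ℝ) ≠ 0 := by positivity
  simp [Real.negMulLog, Real.log_inv]
  field_simp

lemma shannonEntropy_eq {m : ℕ} (p : Fin m → ℝ) :
    shannonEntropy p = (∑ i, Real.negMulLog (p i)) / Real.log 2 := by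
  rw [Finset.sum_div]
  refine Finset.sum_congr rfl fun i _ => ?_
  simp [hfun, Real.negMulLog, Real.logb]
  ring

lemma shannonEntropy_mix {n : ℕ} (hn : 1 ≤ n) (p : Fin n → ℝ) (hp : ∀ i, 0 ≤ p i)
    (hs : ∑ i, p i = 1) {a b : ℝ} (h₁ : 0 < a) (h₁₂ : a < b) (h₂ : b < 1) :
    shannonEntropy (fun i => (1 - a) * p i + a * (1 / (n : ℝ)))
      ≤ shannonEntropy (fun i => (1 - b) * p i + b * (1 / (n : ℝ))) ∧
    ((∃ i, p i ≠ 1 / (n : ℝ)) →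
      shannonEntropy (fun i => (1 - a) * p i + a * (1 / (n : ℝ)))
      < shannonEntropy (fun i => (1 - b) * p i + b * (1 / (n : ℝ)))) := by
  have hn0 : (0 : ℝ) < n := by exact_mod_cast hn
  have hl2 : 0 < Real.log 2 := Real.log_pos (by norm_num)
  obtain ⟨u, hu⟩ : ∃ u : ℝ, u = 1 / (n : ℝ) := ⟨_, rfl⟩
  have hu0 : 0 < u := by rw [hu]; positivity
  have hnu : (n : ℝ) * u = 1 := by rw [hu]; field_simp
  obtain ⟨t, ht⟩ : ∃ t : ℝ, t = (b - a) / (1 - a) := ⟨_, rfl⟩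
  have h1a : 0 < 1 - a := by linarith
  have ht0 : 0 < t := by rw [ht]; exact div_pos (by linarith) h1a
  have hta : t * (1 - a) = b - a := by rw [ht]; field_simp
  have ht1 : 0 < 1 - t := by
    have : t < 1 := by rw [ht, div_lt_one h1a]; linarith
    linarith
  rw [shannonEntropy_eq, shannonEntropy_eq, div_le_div_iff_of_pos_right hl2,
    div_lt_div_iff_of_pos_right hl2, ← hu]
  have hq0 : ∀ i, 0 ≤ (1 - a) * p i + a * u := fun i => by
    have := hp i
    positivity
  have hmix : ∀ i, (1 - b) * p i + b * u
      = (1 - t) • ((1 - a) * p i + a * u) + t • u := fun i => by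
    simp only [smul_eq_mul]
    linear_combination (u - p i) * (-hta)
  have hqs : ∑ i, ((1 - a) * p i + a * u) = 1 := by
    rw [Finset.sum_add_distrib, ← Finset.mul_sum, hs]
    simp
    linear_combination a * hnu
  have hub := sum_negMulLog_le hn _ hq0 hqs
  have hnlog := negMulLog_inv_nat hn
  rw [← hu] at hnlog
  have hsum : ∑ i, ((1 - t) * Real.negMulLog ((1 - a) * p i + a * u) + t * Real.negMulLog u)
      = (1 - t) * ∑ i, Real.negMulLog ((1 - a) * p i + a * u) + t * Real.log n := by
    rw [Finset.sum_add_distrib, ← Finset.mul_sum]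
    simp
    linear_combination t * hnlog
  have hlow : ∑ i, Real.negMulLog ((1 - a) * p i + a * u)
      ≤ ∑ i, ((1 - t) * Real.negMulLog ((1 - a) * p i + a * u) + t * Real.negMulLog u) := by
    rw [hsum]; nlinarith
  have hterm : ∀ i, (1 - t) * Real.negMulLog ((1 - a) * p i + a * u) + t * Real.negMulLog u
      ≤ Real.negMulLog ((1 - b) * p i + b * u) := fun i => by
    rw [hmix i]
    exact Real.concaveOn_negMulLog.2 (hq0 i) hu0.le ht1.le ht0.le (by ring)
  refine ⟨hlow.trans (Finset.sum_le_sum fun i _ => hterm i), ?_⟩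
  rintro ⟨i, hi⟩
  refine hlow.trans_lt (Finset.sum_lt_sum (fun i _ => hterm i) ⟨i, Finset.mem_univ _, ?_⟩)
  rw [hmix i]
  refine Real.strictConcaveOn_negMulLog.2 (hq0 i) hu0.le ?_ ht1 ht0 (by ring)
  intro h
  apply hi
  have : (1 - a) * (p i - u) = 0 := by linear_combination h
  rcases mul_eq_zero.1 this with h | h <;> linarith

lemma chain_card {n : ℕ} (c : Fin (n + 1) → Finset α) (hlast : (c (Fin.last n)).card = n)
    (hc : ∀ i : Fin n, c i.castSucc ⊂ c i.succ) (i : Fin (n + 1)) : (c i).card = i := by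
  have h1 : (i : ℕ) ≤ (c i).card := by
    induction i using Fin.induction with
    | zero => simp
    | succ i ih =>
      have := Finset.card_lt_card (hc i)
      simp at ih ⊢; omega
  have h2 : (c i).card ≤ i := by
    clear h1
    induction i using Fin.reverseInduction with
    | last => simp [hlast]
    | cast i ih =>
      have := Finset.card_lt_card (hc i)
      simp at ih ⊢; omega
  omega

lemma exists_covBy_series {β : Type*} [PartialOrder β] [Finite β] {x y : β} (h : x ≤ y) :
    ∃ p : RelSeries {(a, b) : β × β | a ⋖ b}, p.head = x ∧ p.last = y := by
  classical
  haveI := Fintype.ofFinite β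
  letI : LocallyFiniteOrder β := Fintype.toLocallyFiniteOrder
  have h' := le_iff_reflTransGen_covBy.1 h
  induction h' using Relation.ReflTransGen.head_induction_on with
  | refl => exact ⟨RelSeries.singleton _ y, rfl, rfl⟩
  | head hab hbc ih =>
    obtain ⟨p, hp1, hp2⟩ := ih (le_iff_reflTransGen_covBy.2 hbc)
    exact ⟨p.cons _ (by rw [hp1]; exact hab), by simp, by simpa using hp2⟩

lemma exists_maxChain_through_s13 (S : Finset (Finset α)) (h0 : ∅ ∈ S) (h1 : Finset.univ ∈ S)
    {A : Finset α} (hA : A ∈ S) :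
    ∃ (m : ℕ) (c : Fin (m + 1) → Finset α), IsMaxChainOf S m c ∧ ∃ i, c i = A := by
  obtain ⟨p, hp1, hp2⟩ := exists_covBy_series (β := {x // x ∈ S}) (x := ⟨∅, h0⟩) (y := ⟨A, hA⟩)
    (Finset.empty_subset A)
  obtain ⟨q, hq1, hq2⟩ := exists_covBy_series (β := {x // x ∈ S}) (x := ⟨A, hA⟩)
    (y := ⟨Finset.univ, h1⟩) (Finset.subset_univ A)
  have hpq : p.last = q.head := hp2.trans hq1.symm
  refine ⟨(p.smash q hpq).length, fun i => (p.smash q hpq i).1, ⟨?_, ?_, ?_, ?_, ?_⟩, ?_⟩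
  · have : (p.smash q hpq).head = ⟨∅, h0⟩ := by simpa using hp1
    exact congrArg Subtype.val this
  · have : (p.smash q hpq).last = ⟨Finset.univ, h1⟩ := by simpa using hq2
    exact congrArg Subtype.val this
  · exact fun i => (p.smash q hpq i).2
  · intro i
    exact ((p.smash q hpq).step i).1
  · intro i x hx h
    exact ((p.smash q hpq).step i).2 (c := ⟨x, hx⟩) h.1 h.2
  · refine ⟨(Fin.last p.length).castLE (by simp), ?_⟩
    have : p.smash q hpq ((Fin.last p.length).castLE (by simp)) = ⟨A, hA⟩ := by
      rw [RelSeries.smash_castLE]; exact hp2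
    exact congrArg Subtype.val this

/-- for a capacity `v ≢ v*` on a regular set system, the entropy of
`v_λ := (1 - λ) v + λ v*` is strictly increasing in `λ` on `(0, 1)`, where
`v*(A) = |A| / n` is the additive uniform capacity. -/
theorem capEntropy_strictMono_toward_uniform (S : Finset (Finset α))
    (hS : IsRegularSetSystem S) (hn : 1 ≤ Fintype.card α)
    (v : Finset α → ℝ) (hv : IsCapacity S v)
    (hne : ∃ A ∈ S, v A ≠ (A.card : ℝ) / (Fintype.card α : ℝ))
    (lam₁ lam₂ : ℝ) (h₁ : 0 < lam₁) (h₁₂ : lam₁ < lam₂) (h₂ : lam₂ < 1) :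
    capEntropy S
        (fun A => (1 - lam₁) * v A + lam₁ * ((A.card : ℝ) / (Fintype.card α : ℝ)))
      < capEntropy S
        (fun A => (1 - lam₂) * v A + lam₂ * ((A.card : ℝ) / (Fintype.card α : ℝ))) := by
  obtain ⟨hS0, hS1, hreg⟩ := hS
  obtain ⟨hv0, hv1, -, hmono⟩ := hv
  have hn0 : (0 : ℝ) < Fintype.card α := by exact_mod_cast hn
  have hmem : ∀ c, c ∈ maxChains S ↔ IsMaxChainOf S (Fintype.card α) c := fun c => by
    simp [maxChains]
  have hcard : ∀ c, IsMaxChainOf S (Fintype.card α) c → ∀ i, (c i).card = i := fun c hc =>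
    chain_card c (by rw [hc.2.1, Finset.card_univ]) hc.2.2.2.1
  have hdist : ∀ c, IsMaxChainOf S (Fintype.card α) c → ∀ l : ℝ,
      chainDist (fun A => (1 - l) * v A + l * ((A.card : ℝ) / (Fintype.card α : ℝ))) c
      = fun i => (1 - l) * chainDist v c i + l * (1 / (Fintype.card α : ℝ)) := by
    intro c hc l
    funext i
    simp only [chainDist, hcard c hc]
    simp
    ring
  have hpos : ∀ c, IsMaxChainOf S (Fintype.card α) c → ∀ i, 0 ≤ chainDist v c i :=
    fun c hc i => sub_nonneg.2
      (hmono _ (hc.2.2.1 _) _ (hc.2.2.1 _) (hc.2.2.2.1 i).subset)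
  have hsum : ∀ c, IsMaxChainOf S (Fintype.card α) c → ∑ i, chainDist v c i = 1 := by
    intro c hc
    have := Fin.sum_univ_succ (fun i => v (c i))
    have h2 := Fin.sum_univ_castSucc (fun i => v (c i))
    simp only [chainDist, Finset.sum_sub_distrib]
    rw [hc.1, hv0] at this
    rw [hc.2.1, hv1] at h2
    linarith
  have hmix := fun c (hc : IsMaxChainOf S (Fintype.card α) c) =>
    shannonEntropy_mix hn (chainDist v c) (hpos c hc) (hsum c hc) h₁ h₁₂ h₂
  obtain ⟨A, hA, hvA⟩ := hne
  obtain ⟨m, c, hc, j, hj⟩ := exists_maxChain_through_s13 S hS0 hS1 hA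
  obtain rfl := hreg m c hc
  have hcne : ∃ i, chainDist v c i ≠ 1 / (Fintype.card α : ℝ) := by
    by_contra! hall
    apply hvA
    rw [← hj, hcard c hc]
    clear hj
    induction j using Fin.induction with
    | zero => simp [hc.1, hv0]
    | succ i ih =>
      have := hall i
      simp only [chainDist] at this
      simp only [Fin.val_castSucc, Fin.val_succ] at ih ⊢
      push_cast
      rw [add_div, ← ih, ← this]
      ring
  have hcm := (hmem c).2 hc
  have hcpos : (0 : ℝ) < (maxChains S).card := by
    exact_mod_cast Finset.card_pos.2 ⟨c, hcm⟩
  unfold capEntropy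
  refine mul_lt_mul_of_pos_left ?_ (by positivity)
  refine Finset.sum_lt_sum (fun d hd => ?_) ⟨c, hcm, ?_⟩
  · have hd' := (hmem d).1 hd
    rw [hdist d hd', hdist d hd']
    exact (hmix d hd').1
  · rw [hdist c hc, hdist c hc]
    exact (hmix c hc).2 hcne
end

section
/- Let (N, 𝔖) be a regular set system. Then 𝔖 satisfies the Jordan–Dedekind chain condition: for any A, B ∈ 𝔖 with A ⊆ B, all maximal chains of the segment [A, B] = {X ∈ 𝔖 : A ⊆ X ⊆ B} (ordered by inclusion) have the same length. -/
open Finset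

variable {α : Type*} [DecidableEq α] [Fintype α]

/-- `d = (d 0, …, d k)` is a maximal chain of the segment `[A, B]` of the set
system `S`: `A = d 0 ⊊ ⋯ ⊊ d k = B`, each `d j ∈ S`, and no element of `S` lies
strictly between consecutive elements. Its length is `k`. -/
def IsSegmentMaxChain (S : Finset (Finset α)) (A B : Finset α) (k : ℕ)
    (d : Fin (k + 1) → Finset α) : Prop :=
  d 0 = A ∧ d (Fin.last k) = B ∧ (∀ j, d j ∈ S) ∧
    (∀ j : Fin k, d j.castSucc ⊂ d j.succ) ∧
    (∀ j : Fin k, ∀ x ∈ S, ¬(d j.castSucc ⊂ x ∧ x ⊂ d j.succ))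

/-- `B` covers `A` inside `S`. -/
def SStep (S : Finset (Finset α)) (A B : Finset α) : Prop :=
  A ⊂ B ∧ ∀ x ∈ S, ¬(A ⊂ x ∧ x ⊂ B)

/-- Inductive version of maximal chains of a segment. -/
inductive SChain (S : Finset (Finset α)) (A : Finset α) : ℕ → Finset α → Prop
  | nil : A ∈ S → SChain S A 0 A
  | snoc (n : ℕ) (B C : Finset α) : SChain S A n B → C ∈ S → SStep S B C → SChain S A (n + 1) C

lemma SChain.trans {S : Finset (Finset α)} {A B C : Finset α} {m n : ℕ}
    (h₁ : SChain S A m B) (h₂ : SChain S B n C) : SChain S A (m + n) C := by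
  induction h₂ with
  | nil _ => exact h₁
  | snoc n X Y _ hY hs ih => exact SChain.snoc _ _ _ ih hY hs

lemma SChain.of_segment {S : Finset (Finset α)} {A : Finset α} (k : ℕ) :
    ∀ (B : Finset α) (d : Fin (k + 1) → Finset α), IsSegmentMaxChain S A B k d →
      SChain S A k B := by
  induction k with
  | zero =>
    rintro B d ⟨h0, h1, h2, -, -⟩
    have hAB : A = B := by rw [← h0, ← h1]; rfl
    subst hAB
    exact SChain.nil (h0 ▸ h2 0)
  | succ k ih =>
    rintro B d ⟨h0, h1, h2, h3, h4⟩
    refine SChain.snoc k (d (Fin.last k).castSucc) B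
      (ih _ (fun i => d i.castSucc) ⟨h0, rfl, fun j => h2 _, fun j => ?_, fun j => ?_⟩)
      (h1 ▸ h2 _) ?_
    · exact h3 j.castSucc
    · exact h4 j.castSucc
    · have := h3 (Fin.last k)
      have h5 := h4 (Fin.last k)
      rw [Fin.succ_last, h1] at this h5
      exact ⟨this, h5⟩

lemma SChain.to_segment {S : Finset (Finset α)} {A B : Finset α} {k : ℕ}
    (h : SChain S A k B) : ∃ d : Fin (k + 1) → Finset α, IsSegmentMaxChain S A B k d := by
  induction h with
  | nil hA => exact ⟨fun _ => A, rfl, rfl, fun _ => hA, fun j => j.elim0, fun j => j.elim0⟩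
  | snoc n X Y _ hY hs ih =>
    obtain ⟨d, h0, h1, h2, h3, h4⟩ := ih
    have e1 : ∀ i : Fin (n + 1),
        (Fin.snoc d Y : Fin (n + 1 + 1) → Finset α) i.castSucc = d i :=
      fun i => Fin.snoc_castSucc (α := fun _ => Finset α) Y d i
    have e2 : (Fin.snoc d Y : Fin (n + 1 + 1) → Finset α) (Fin.last (n + 1)) = Y :=
      Fin.snoc_last (α := fun _ => Finset α) Y d
    refine ⟨(Fin.snoc d Y : Fin (n + 1 + 1) → Finset α), ?_, e2, fun j => ?_, fun j => ?_,
      fun j => ?_⟩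
    · exact (e1 0).trans h0
    · refine Fin.lastCases ?_ (fun i => ?_) j
      · rw [e2]; exact hY
      · rw [e1]; exact h2 i
    · refine Fin.lastCases ?_ (fun i => ?_) j
      · rw [e1, Fin.succ_last, e2, h1]; exact hs.1
      · rw [e1, Fin.succ_castSucc, e1]; exact h3 i
    · refine Fin.lastCases ?_ (fun i => ?_) j
      · rw [e1, Fin.succ_last, e2, h1]; exact hs.2
      · rw [e1, Fin.succ_castSucc, e1]; exact h4 i

lemma SChain.exists_of_subset {S : Finset (Finset α)} {A : Finset α} (hA : A ∈ S)
    (B : Finset α) : B ∈ S → A ⊆ B → ∃ n, SChain S A n B := by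
  induction B using Finset.strongInduction with
  | H B ih =>
    intro hB hAB
    by_cases hE : A = B
    · subst hE; exact ⟨0, SChain.nil hA⟩
    · have hne : (S.filter (fun X => A ⊆ X ∧ X ⊂ B)).Nonempty :=
        ⟨A, by simp [hA, hAB.ssubset_of_ne hE]⟩
      obtain ⟨X, hX, hmax⟩ := Finset.exists_max_image _ Finset.card hne
      simp only [Finset.mem_filter] at hX hmax
      obtain ⟨n, hn⟩ := ih X hX.2.2 hX.1 hX.2.1
      refine ⟨n + 1, SChain.snoc n X B hn hB ⟨hX.2.2, fun x hx h => ?_⟩⟩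
      have h1 := hmax x ⟨hx, hX.2.1.trans h.1.subset, h.2⟩
      have h2 := Finset.card_lt_card h.1
      omega

/-- a regular set system satisfies the Jordan–Dedekind chain
condition: all maximal chains of any segment `[A, B]` have the same length. -/
theorem regularSetSystem_jordanDedekind (S : Finset (Finset α))
    (hS : IsRegularSetSystem S) (A B : Finset α) (hA : A ∈ S) (hB : B ∈ S)
    (hAB : A ⊆ B) (k₁ k₂ : ℕ) (d₁ : Fin (k₁ + 1) → Finset α)
    (d₂ : Fin (k₂ + 1) → Finset α) (h₁ : IsSegmentMaxChain S A B k₁ d₁)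
    (h₂ : IsSegmentMaxChain S A B k₂ d₂) : k₁ = k₂ := by
  obtain ⟨m, hm⟩ := SChain.exists_of_subset hS.1 A hA (Finset.empty_subset A)
  obtain ⟨n, hn⟩ := SChain.exists_of_subset hB Finset.univ hS.2.1 (Finset.subset_univ B)
  obtain ⟨c₁, hc₁⟩ := ((hm.trans (SChain.of_segment _ _ _ h₁)).trans hn).to_segment
  obtain ⟨c₂, hc₂⟩ := ((hm.trans (SChain.of_segment _ _ _ h₂)).trans hn).to_segment
  have e₁ := hS.2.2 _ c₁ hc₁
  have e₂ := hS.2.2 _ c₂ hc₂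
  omega
end
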